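/- There exists a binary self-dual code of length 68 and minimum (nonzero) weight 12 that has exactly 1158 codewords of weight 12 and exactly 13272 codewords of weight 14 (i.e. a self-dual [68,34,12] code with weight enumerator W_{68,2} with γ = 1 and β = 179). -/

import Mathlib

/-- The dual of a code (submodule of `ι → R`) with respect to the standard bilinear form. -/
def dualCode {R : Type*} [CommRing R] {ι : Type*} [Fintype ι]
    (C : Submodule R (ι → R)) : Submodule R (ι → R) where
  carrier := {x | ∀ c ∈ C, ∑ i, x i * c i = 0}
  add_mem' := by
    intro a b ha hb c hc
    simp only [Set.mem_setOf_eq] at ha hb ⊢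
    simp [Pi.add_apply, add_mul, Finset.sum_add_distrib, ha c hc, hb c hc]
  zero_mem' := by
    intro c hc
    simp
  smul_mem' := by
    intro r a ha c hc
    simp only [Set.mem_setOf_eq] at ha ⊢
    simp [Pi.smul_apply, smul_eq_mul, mul_assoc, ← Finset.mul_sum, ha c hc]

/-- A code is self-dual if it equals its dual. -/
def IsSelfDual {R : Type*} [CommRing R] {ι : Type*} [Fintype ι]
    (C : Submodule R (ι → R)) : Prop :=
  C = dualCode C

/-- The first 34 rows `(I | A)` of the symmetric parity check matrix, as bit masks. -/
def rowsL : List ℕ :=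
  [87781632929658044417, 49891439484524822530, 206929988836111941636, 269852875489208696840,
   87701833639889207312, 10298492888954175520, 290369358427345387584, 285082890079863570560,
   62859902125932019968, 201711174349620249088, 268108663259981153280, 31271347661710559232,
   204971285338826739712, 247416482332275646464, 204328500224069746688, 136175670669598556160,
   275321421639400357888, 54893293148303392768, 261456394247219707904, 79022668834572599296,
   137705581743201845248, 141923766843700412416, 32507826260416659456, 137901628239854436352,
   241248121701313544192, 95320756613984288768, 184060368512851378176, 124860918184160526336,
   200134994177722155008, 12874574931731415040, 103726906876369043456, 124479634165278441472,
   14954061829490343936, 197147325496547082240]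

/-- The last 34 rows `(Aᵀ | I)` of the symmetric parity check matrix, as bit masks. -/
def rowsR : List ℕ :=
  [18421485132, 35936966388, 70699493285, 139117249830,
   277374034694, 552931468586, 1102436510034, 2201345569155,
   4401138174466, 8798882886434, 17594774193506, 35187061680578,
   70371265492098, 140742412230834, 281480068900343, 562955228097405,
   1125904532517449, 2251809429068660, 4503608336951709, 9007208671758447,
   18014407628394410, 36028813857782892, 72057610445187668, 144115204841554469,
   288230392393437926, 576460768788035424, 1152921508728953030, 2305843020600683470,
   4611686023206511505, 9223372053974027899, 18446744074916526532, 36893488158571222990,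
   73786976298256409817, 147573952598619027148]

/-- Bit mask of a vector of weight 6 in the shadow of the code. -/
def shadowMask : ℕ := 72634054790231359488

/-- The representative of the shadow coset supported on the right half. -/
def offL : ℕ := 72634054790231359488

/-- The representative of the shadow coset supported on the left half. -/
def offR : ℕ := 10418286824

/-- The vectors of weight at most 10 in the shadow. -/
def lowShadow : List ℕ :=
  [422290043310600, 3096362720436272, 6192450595504193, 10133120703628418,
   18155174786959620, 36311371616550945, 72622743233101890, 145241090534670468,
   180223159864133889, 288230656132546824, 333354402142240840, 362561777952625154,
   576602040122311184, 666572464842605712, 725123554865061924, 1152922063556611332,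
   1152922201465833506, 1152926736019645440, 1155174404100004360, 1155174422185808964,
   1155183750066228224, 1157427303593160752, 1157427354797156488, 1157445995493071872,
   1161928706680447041, 1161928809088438544, 1161966089440081920, 1170936178296767618,
   1170936384152937985, 1171006548957229056, 1263277287735435264, 1373633070863007744,
   1594344637119136768, 1765419858648174592, 2035631430156060672, 2305847545068393474,
   2305851807118927876, 2305856479313576192, 2305860619016359944, 2305869964445812224,
   2305878228817978384, 2305896919644407840, 2305913447382075393, 2305917915595677824,
   2305950830075121728, 4648561439466852380, 4648990267205484672, 4684042735463727360,
   4685432464607289369, 4720194635916378116, 4756540181398487552, 4756927385851412499,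
   4831095779969990664, 4900057686655108103, 4901394344369586208, 5050505541480087568,
   5188570082741061646, 5188714261547057216, 5243456745392570370, 5487073269014069249,
   9225905322416324624, 9230690661194597377, 9238009285534418946, 9241529381003272200,
   9250394738694328324, 9263063341467697168, 9300498454662873089, 9377761476053303298,
   9485003096428904449, 9529899116511887364, 9746634156003033090, 9800538151638269960,
   9912563555986571280, 10127469683541016584, 10233867212918095876, 13835088841742491968,
   13835119628201804416, 13835141618233249952, 13835168006478629440, 13835181201121412384,
   18446766090836510720, 18446815000800139396, 18449001371081683208, 18449039905596149760,
   18451258668453814800, 18451335737482747904, 18455768867298001953, 18455791061814099968,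
   18464793931469360194, 18464837776114451456, 23094466586811057154, 23130498700618501124,
   23202563183783974920, 23346696546013949968, 23634962999890960385, 27670118348292661280,
   27670256918987882560, 27670397997994345600, 27670679611620198656, 27671243127708455424,
   36893488218324402307, 36893488287278522880, 36893488423916684320, 36893488559811625222,
   36893488698399982092, 36893488714405416000, 36893489264380739640, 36893489281359222912,
   36893490381341360209, 36893490415298326784, 36893492683575814146, 36893496944888140804,
   36893505757389532168, 36893523366318757904, 36893558585218380801, 72634054790231359488,
   73787119244374181120, 73789650309543365120, 73792324594831462432, 73797672893752025152,
   73806117697147125888, 78513084090323828736, 78625249675964317696, 78849726242625683456,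
   79014249191139442688, 79264902112455163904, 83046377550696677382, 83084658293562408972,
   83158968270464221208, 83263113423436644352, 83307588209202954257, 83518271026680037376,
   83604823690813898755, 83714317523332628480, 83920779146015277056, 84023941926148374528,
   92270914647902781456, 92305857131739086849, 92377998284354486274, 92522276200160198660,
   92810832031740133384, 147573953004294905860, 147573953415659667464, 147573954256675275792,
   147573954859659956226, 147573955922633951233, 149879796158880024768, 149882048515495956864,
   149884301432101806848, 149888802869414478368, 149897810410521756768, 152185638681439109648,
   152185779483640332321, 152185920084332511298, 152186201575593607300, 152186764543050907912,
   152222938449154539808, 152260238277320376896, 152334978675435372704, 152484318742765928768,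
   152780747081909338752, 166020709858062436032, 166020723051698719136, 166020749440011473728,
   166020771430445138272, 166020802216636981920]

/-- Lanes of the low weight shadow vectors in the left enumeration. -/
def excL : List ℕ :=
  [0, 383, 385, 638, 640, 1028, 1030, 1586,
   1588, 2380, 2382, 19429, 21351, 24762, 25235, 32351,
   40285, 46684, 48288, 54873, 55320, 58968, 63533, 67308,
   72834, 82744, 85290, 95368, 97469, 97971, 100565, 103710,
   108223, 110099, 115113, 116475, 117848, 118324, 125187, 130268,
   132686, 138412, 139921, 140810, 142031, 145361, 147390, 147689,
   147691, 149468, 155494, 166568, 174693, 174695, 175531, 178096,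
   185112, 194362, 196480, 202408, 206634, 206763, 206765, 210761,
   219069, 231914, 238482, 242629, 243215, 243387, 243389, 244730,
   252744, 254895, 257349, 279522, 284071, 284842, 285068, 285070,
   286495, 291630, 296140, 299500, 312493, 326026]

/-- Lanes of the low weight shadow vectors in the right enumeration. -/
def excR : List ℕ :=
  [1535, 3390, 4955, 5003, 5063, 5744, 7495, 10679,
   11380, 12705, 12955, 12993, 13295, 14603, 15007, 16846,
   17609, 18507, 18957, 19255, 19350, 19810, 20352, 21421,
   21580, 21782, 22093, 23621, 24162, 24201, 24222, 25161,
   25546, 25561, 25727, 27845, 27971, 28248, 28737, 29503,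
   29731, 30775, 31525, 31858, 31935, 33280, 33299, 34561,
   34579, 34796, 35643, 36022, 36025, 36461, 36484, 36950,
   37823, 37999, 38023, 38041, 39410, 39413, 42300, 42892,
   43247, 43265, 44405, 44416, 44757, 45106, 46555, 47878,
   47943, 48990, 49008, 49845, 50246, 50387, 50625, 51001]

/-- Number of sublists of length at most `k` of `l`. -/
def laneCount (l : List ℕ) : ℕ → ℕ :=
  List.rec (motive := fun _ => ℕ → ℕ) (fun _ => 1)
    (fun _ _ ih k => Nat.rec (motive := fun _ => ℕ) 1
      (fun k1 _ => Nat.add (ih (Nat.succ k1)) (ih k1)) k) l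

/-- Sum (bitwise xor) of `off` and the `p`-th sublist of length at most `k` of `l`. -/
def laneWord (off : ℕ) (l : List ℕ) : ℕ → ℕ → ℕ :=
  List.rec (motive := fun _ => ℕ → ℕ → ℕ) (fun _ _ => off)
    (fun a l1 ih k => Nat.rec (motive := fun _ => ℕ → ℕ) (fun _ => off)
      (fun k1 _ p => Bool.rec (motive := fun _ => ℕ)
        (Nat.xor a (ih k1 (Nat.sub p (laneCount l1 (Nat.succ k1)))))
        (ih (Nat.succ k1) p) (Nat.blt p (laneCount l1 (Nat.succ k1)))) k) l

/-- The number whose `p`-th bit is the `i`-th bit of `laneWord off l k p`. -/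
def plane (i off : ℕ) (l : List ℕ) : ℕ → ℕ :=
  List.rec (motive := fun _ => ℕ → ℕ) (fun _ => Bool.toNat (Nat.testBit off i))
    (fun a l1 ih k => Nat.rec (motive := fun _ => ℕ) (Bool.toNat (Nat.testBit off i))
      (fun k1 _ => Nat.lor (ih (Nat.succ k1))
        (Nat.shiftLeft
          (Nat.xor (ih k1) (Nat.mul (Bool.toNat (Nat.testBit a i))
            (Nat.sub (Nat.shiftLeft 1 (laneCount l1 k1)) 1)))
          (laneCount l1 (Nat.succ k1)))) k) l

/-- The `p`-th bit of `atLeast one Ps j` says that at least `j` of the numbers in `Ps`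
have their `p`-th bit set. -/
def atLeast (one : ℕ) (Ps : List ℕ) : ℕ → ℕ :=
  List.rec (motive := fun _ => ℕ → ℕ) (fun j => Nat.rec (motive := fun _ => ℕ) one (fun _ _ => 0) j)
    (fun P _ ih j => Nat.rec (motive := fun _ => ℕ) one
      (fun j1 _ => Nat.lor (ih (Nat.succ j1)) (Nat.land P (ih j1))) j) Ps

/-- All planes. -/
def planes (off : ℕ) (l : List ℕ) (k : ℕ) : List ℕ :=
  (List.range 68).map fun i => plane i off l k

/-- The exceptional lanes, as a bit mask. -/
def laneMask (exc : List ℕ) : ℕ := exc.foldr (fun p m => Nat.lor (Nat.shiftLeft 1 p) m) 0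

/-- The check: every lane outside `exc` has weight more than 10. -/
def batch (off : ℕ) (l : List ℕ) (k : ℕ) (exc : List ℕ) : Bool :=
  Nat.beq (Nat.lor (atLeast (Nat.sub (Nat.shiftLeft 1 (laneCount l k)) 1) (planes off l k) 11)
    (laneMask exc)) (Nat.sub (Nat.shiftLeft 1 (laneCount l k)) 1)
theorem laneCount_pos (l : List ℕ) (k : ℕ) : 0 < laneCount l k := by
  induction l generalizing k with
  | nil => exact Nat.one_pos
  | cons a l ih =>
    cases k with
    | zero => exact Nat.one_pos
    | succ k => exact Nat.add_pos_left (ih (k + 1)) _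

theorem laneWord_cons (off a : ℕ) (l : List ℕ) (k p : ℕ) :
    laneWord off (a :: l) (k + 1) p =
      if p < laneCount l (k + 1) then laneWord off l (k + 1) p
      else a ^^^ laneWord off l k (p - laneCount l (k + 1)) := by
  have h : laneWord off (a :: l) (k + 1) p = Bool.rec (motive := fun _ => ℕ)
        (a ^^^ laneWord off l k (p - laneCount l (k + 1)))
        (laneWord off l (k + 1) p) (Nat.blt p (laneCount l (k + 1))) := rfl
  rw [h]
  by_cases hp : p < laneCount l (k + 1)
  · have : Nat.blt p (laneCount l (k + 1)) = true := by simpa [Nat.blt_eq] using hp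
    rw [this, if_pos hp]
  · have : Nat.blt p (laneCount l (k + 1)) = false := by
      rw [Bool.eq_false_iff]; intro h2; exact hp (by simpa [Nat.blt_eq] using h2)
    rw [this, if_neg hp]

theorem plane_cons (i off a : ℕ) (l : List ℕ) (k : ℕ) :
    plane i off (a :: l) (k + 1) =
      plane i off l (k + 1) |||
        ((plane i off l k ^^^ ((a.testBit i).toNat * (1 <<< laneCount l k - 1)))
          <<< laneCount l (k + 1)) := rfl

theorem testBit_toNat (b : Bool) (p : ℕ) : b.toNat.testBit p = (decide (p = 0) && b) := by
  cases b <;> cases p <;> simp [Nat.testBit_succ]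

theorem ones_testBit (n p : ℕ) : (1 <<< n - 1).testBit p = decide (p < n) := by
  rw [Nat.one_shiftLeft, Nat.testBit_two_pow_sub_one]

theorem plane_testBit (i off : ℕ) (l : List ℕ) (k p : ℕ) :
    (plane i off l k).testBit p =
      (decide (p < laneCount l k) && (laneWord off l k p).testBit i) := by
  induction l generalizing k p with
  | nil =>
    have h : plane i off [] k = (off.testBit i).toNat := rfl
    have h2 : laneCount [] k = 1 := rfl
    have h3 : laneWord off [] k p = off := rfl
    rw [h, h2, h3, testBit_toNat]; congr 1; simp
  | cons a l ih =>
    cases k with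
    | zero =>
      have h : plane i off (a :: l) 0 = (off.testBit i).toNat := rfl
      have h2 : laneCount (a :: l) 0 = 1 := rfl
      have h3 : laneWord off (a :: l) 0 p = off := rfl
      rw [h, h2, h3, testBit_toNat]; congr 1; simp
    | succ k =>
      have h2 : laneCount (a :: l) (k + 1) = laneCount l (k + 1) + laneCount l k := rfl
      rw [plane_cons, h2, laneWord_cons, Nat.testBit_or, ih, Nat.testBit_shiftLeft, Nat.testBit_xor, ih]
      have h4 : ((a.testBit i).toNat * (1 <<< laneCount l k - 1)).testBit
          (p - laneCount l (k + 1)) =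
          (a.testBit i && decide (p - laneCount l (k + 1) < laneCount l k)) := by
        cases a.testBit i
        · simp
        · simp only [Bool.toNat_true, one_mul, ones_testBit, Bool.true_and]
      rw [h4]
      by_cases hp : p < laneCount l (k + 1)
      · have h5 : ¬ (p ≥ laneCount l (k + 1)) := by omega
        have h6 : p < laneCount l (k + 1) + laneCount l k := by omega
        simp [hp, h6]
      · have h5 : (p ≥ laneCount l (k + 1)) := by omega
        rw [if_neg hp, Nat.testBit_xor]
        by_cases h6 : p < laneCount l (k + 1) + laneCount l k
        · have h7 : p - laneCount l (k + 1) < laneCount l k := by omega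
          simp [hp, h5, h6, h7, Bool.xor_comm]
        · have h7 : ¬ (p - laneCount l (k + 1) < laneCount l k) := by omega
          simp [hp, h6, h7]

theorem laneWord_surj (off : ℕ) (l : List ℕ) (k : ℕ) (T : List ℕ) (hT : T.Sublist l)
    (hk : T.length ≤ k) :
    ∃ p, p < laneCount l k ∧ laneWord off l k p = T.foldr (fun a x => a ^^^ x) off := by
  induction l generalizing k T with
  | nil =>
    have : T = [] := by simpa using hT
    subst this
    exact ⟨0, Nat.one_pos, rfl⟩
  | cons a l ih =>
    cases k with
    | zero =>
      have : T = [] := by simpa using hk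
      subst this
      exact ⟨0, Nat.one_pos, rfl⟩
    | succ k =>
      have h2 : laneCount (a :: l) (k + 1) = laneCount l (k + 1) + laneCount l k := rfl
      cases hT with
      | cons _ h =>
        obtain ⟨p, hp, hw⟩ := ih (k + 1) T h hk
        exact ⟨p, by omega, by rw [laneWord_cons, if_pos hp, hw]⟩
      | cons_cons _ h =>
        rename_i T1
        obtain ⟨p, hp, hw⟩ := ih k T1 h (by simpa using hk)
        refine ⟨laneCount l (k + 1) + p, by omega, ?_⟩
        rw [laneWord_cons, if_neg (by omega), Nat.add_sub_cancel_left, hw]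
        rfl

theorem atLeast_testBit (one : ℕ) (Ps : List ℕ) (j p : ℕ) (hp : one.testBit p = true) :
    (atLeast one Ps j).testBit p = decide (j ≤ Ps.countP fun P => P.testBit p) := by
  induction Ps generalizing j with
  | nil =>
    cases j with
    | zero => simpa [atLeast] using hp
    | succ j => simp [atLeast]
  | cons P Ps ih =>
    cases j with
    | zero => simpa [atLeast] using hp
    | succ j =>
      have h : atLeast one (P :: Ps) (j + 1) =
        atLeast one Ps (j + 1) ||| (P &&& atLeast one Ps j) := rfl
      rw [h, Nat.testBit_or, Nat.testBit_and, ih, ih, List.countP_cons]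
      cases P.testBit p
      · simp
      · simp only [Bool.true_and, if_true]
        rw [Bool.eq_iff_iff]; simp; omega

theorem laneMask_testBit (exc : List ℕ) (p : ℕ) :
    (laneMask exc).testBit p = true → p ∈ exc := by
  induction exc with
  | nil => simp [laneMask]
  | cons a l ih =>
    have h : laneMask (a :: l) = (1 <<< a) ||| laneMask l := rfl
    rw [h, Nat.testBit_or, Nat.one_shiftLeft, Nat.testBit_two_pow]
    simp only [Bool.or_eq_true, decide_eq_true_eq, List.mem_cons]
    rintro (h | h)
    · exact Or.inl h.symm
    · exact Or.inr (ih h)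

/-- The number of ones among the 68 lowest binary digits. -/
def ones (n : ℕ) : ℕ := (List.range 68).countP fun i => n.testBit i

theorem batch_spec (off : ℕ) (l : List ℕ) (k : ℕ) (exc L : List ℕ)
    (hb : batch off l k exc = true) (hL : ∀ p ∈ exc, laneWord off l k p ∈ L)
    (T : List ℕ) (hT : T.Sublist l) (hk : T.length ≤ k) :
    10 < ones (T.foldr (fun a x => a ^^^ x) off) ∨ T.foldr (fun a x => a ^^^ x) off ∈ L := by
  obtain ⟨p, hp, hw⟩ := laneWord_surj off l k T hT hk
  rw [← hw]
  have h1 : atLeast (1 <<< laneCount l k - 1) (planes off l k) 11 ||| laneMask exc =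
      1 <<< laneCount l k - 1 := Nat.eq_of_beq_eq_true hb
  have ho : (1 <<< laneCount l k - 1).testBit p = true := by
    rw [ones_testBit]; simpa using hp
  have h2 := congrArg (fun n => n.testBit p) h1
  simp only [Nat.testBit_or] at h2
  rw [ho, Bool.or_eq_true, atLeast_testBit _ _ _ _ ho] at h2
  rcases h2 with h2 | h2
  · left
    have h3 := of_decide_eq_true h2
    rw [planes, List.countP_map] at h3
    refine lt_of_lt_of_le h3 (le_of_eq ?_)
    unfold ones
    apply List.countP_congr
    intro i _
    simp only [Function.comp, plane_testBit]
    simp [hp]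
  · right
    exact hL p (laneMask_testBit exc p h2)
/-- The vector of `F_2^68` with the given bit mask. -/
def vec (n : ℕ) : Fin 68 → ZMod 2 := fun i => if n.testBit i then 1 else 0

theorem vec_xor (a b : ℕ) : vec (a ^^^ b) = vec a + vec b := by
  funext i
  simp only [vec, Pi.add_apply, Nat.testBit_xor]
  cases a.testBit i <;> cases b.testBit i <;> decide

theorem vec_zero : vec 0 = 0 := by
  funext i; simp [vec]

theorem zmod2_cases (a : ZMod 2) : a = 0 ∨ a = 1 := by
  revert a; decide

theorem norm_vec (n : ℕ) : hammingNorm (vec n) = ones n := by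
  have h : hammingNorm (vec n) =
      (Finset.univ.filter fun i : Fin 68 => n.testBit i = true).card := by
    unfold hammingNorm
    congr 1
    ext i
    simp [vec]
  rw [h, ones, Finset.card_filter, Fin.sum_univ_def, ← List.map_coe_finRange_eq_range,
    List.countP_map]
  generalize List.finRange 68 = l
  induction l with
  | nil => rfl
  | cons a l ih =>
    rw [List.map_cons, List.sum_cons, ih, List.countP_cons]
    simp [add_comm]

/-- All 68 rows of the parity check matrix. -/
def rows : List ℕ := rowsL ++ rowsR

/-- The `k`-th row of the parity check matrix. -/
def row (k : Fin 68) : ℕ := rows.getD k 0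

/-- The half of the coordinates to which `k` belongs. -/
def side (k : Fin 68) : Bool := Nat.blt k 34

/-- The rows of the parity check matrix as vectors. -/
def H (k : Fin 68) : Fin 68 → ZMod 2 := vec (row k)

/-- The code. -/
def code : Submodule (ZMod 2) (Fin 68 → ZMod 2) where
  carrier := {v | ∀ k, ∑ m, H k m * v m = 0}
  add_mem' := by
    intro a b ha hb k
    simp only [Set.mem_ofPred_eq] at ha hb
    simp [mul_add, Finset.sum_add_distrib, ha k, hb k]
  zero_mem' := by
    intro k
    simp
  smul_mem' := by
    intro r a ha k
    simp only [Set.mem_ofPred_eq] at ha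
    simp [mul_left_comm, ← Finset.mul_sum, ha k]

theorem mem_code (v : Fin 68 → ZMod 2) : v ∈ code ↔ ∀ k, ∑ m, H k m * v m = 0 := Iff.rfl

theorem row_symm : ∀ k ∈ List.finRange 68, ∀ m ∈ List.finRange 68,
    (row k).testBit m = (row m).testBit k := by
  decide +kernel

theorem row_side : ∀ k ∈ List.finRange 68, ∀ m ∈ List.finRange 68,
    side k = side m → (row k).testBit m = decide (k = m) := by
  decide +kernel

theorem H_symm (k m : Fin 68) : H k m = H m k := by
  simp only [H, vec, row_symm k (List.mem_finRange k) m (List.mem_finRange m)]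

theorem H_side (k m : Fin 68) (h : side k = side m) : H k m = if k = m then 1 else 0 := by
  simp only [H, vec, row_side k (List.mem_finRange k) m (List.mem_finRange m) h]
  simp

theorem vec_foldr (off : ℕ) (q : Fin 68 → Bool) (m : Fin 68) (L : List (Fin 68)) :
    vec (((L.filter q).map row).foldr (fun a x => a ^^^ x) off) m =
      vec off m + (L.map fun k => if q k then H k m else 0).sum := by
  induction L with
  | nil => simp
  | cons a L ih =>
    by_cases h : q a
    · rw [List.filter_cons_of_pos h, List.map_cons, List.foldr_cons, vec_xor, Pi.add_apply, ih]
      simp only [List.map_cons, List.sum_cons, h, if_true]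
      rw [show vec (row a) m = H a m from rfl]
      ring
    · rw [List.filter_cons_of_neg h, ih]
      simp [h]

theorem vec_foldr_univ (off : ℕ) (q : Fin 68 → Bool) (m : Fin 68) :
    vec ((((List.finRange 68).filter q).map row).foldr (fun a x => a ^^^ x) off) m =
      vec off m + ∑ k, if q k then H k m else 0 := by
  rw [vec_foldr, Fin.sum_univ_def]

/-- The syndrome of a bit mask. -/
def syn (x : ℕ) : ℕ :=
  (((List.finRange 68).filter fun k : Fin 68 => x.testBit k).map row).foldr (fun a x => a ^^^ x) 0

theorem mem_of_syn (x : ℕ) (h : syn x = 0) : vec x ∈ code := by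
  intro k
  have h1 := vec_foldr_univ 0 (fun k : Fin 68 => x.testBit k) k
  rw [show (((List.finRange 68).filter fun k : Fin 68 => x.testBit k).map row).foldr
    (fun a x => a ^^^ x) 0 = syn x from rfl, h, vec_zero] at h1
  simp only [Pi.zero_apply, zero_add] at h1
  rw [h1]
  apply Finset.sum_congr rfl
  intro m _
  rw [H_symm k m]
  simp only [vec]
  cases x.testBit m <;> simp

theorem syn_rows : ∀ k ∈ List.finRange 68, syn (row k) = 0 := by decide +kernel
theorem syn_lowShadow : ∀ x ∈ lowShadow, syn (x ^^^ shadowMask) = 0 := by decide +kernel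
theorem syn_offL : syn (offL ^^^ shadowMask) = 0 := by decide +kernel
theorem syn_offR : syn (offR ^^^ shadowMask) = 0 := by decide +kernel
theorem syn_one : syn (2 ^ 68 - 1) = 0 := by decide +kernel

theorem H_mem (k : Fin 68) : H k ∈ code := mem_of_syn _ (syn_rows k (List.mem_finRange k))

theorem add_self2 (a : ZMod 2) : a + a = 0 := by revert a; decide

theorem eq_of_add2 (a b : ZMod 2) (h : a + b = 0) : a = b := by revert a b; decide

theorem expand_code (v : Fin 68 → ZMod 2) (hv : v ∈ code) (b : Bool) (m : Fin 68) :
    ∑ k, (if side k = b then v k * H k m else 0) = v m := by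
  have hs : ∀ c, side m = c → ∑ k, (if side k = c then v k * H k m else 0) = v m := by
    intro c hc
    rw [Finset.sum_eq_single m]
    · rw [if_pos hc, H_side m m rfl]; simp
    · intro k _ hk
      split_ifs with h
      · rw [H_side k m (h.trans hc.symm), if_neg hk, mul_zero]
      · rfl
    · simp
  by_cases hm : side m = b
  · exact hs b hm
  · have h1 := hs (side m) rfl
    have h2 := hv m
    have h3 : (∑ k, (if side k = b then v k * H k m else 0)) +
        ∑ k, (if side k = side m then v k * H k m else 0) = 0 := by
      rw [← Finset.sum_add_distrib]
      refine Eq.trans ?_ h2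
      apply Finset.sum_congr rfl
      intro k _
      rw [H_symm m k]
      by_cases hk : side k = b
      · have : side k ≠ side m := fun h => hm (h.symm.trans hk)
        rw [if_pos hk, if_neg this, add_zero, mul_comm]
      · have : side k = side m := by
          revert hk hm; cases side k <;> cases side m <;> cases b <;> simp
        rw [if_neg hk, if_pos this, zero_add, mul_comm]
    rw [h1] at h3
    exact eq_of_add2 _ _ h3

theorem code_orth (v w : Fin 68 → ZMod 2) (hv : v ∈ code) (hw : w ∈ code) :
    ∑ i, v i * w i = 0 := by
  have h : ∀ i, v i * w i = ∑ k, (if side k = true then v k * (H k i * w i) else 0) := by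
    intro i
    conv_lhs => rw [← expand_code v hv true i]
    rw [Finset.sum_mul]
    apply Finset.sum_congr rfl
    intro k _
    split_ifs
    · ring
    · ring
  simp only [h]
  rw [Finset.sum_comm]
  apply Finset.sum_eq_zero
  intro k _
  split_ifs
  · rw [← Finset.mul_sum, hw k, mul_zero]
  · simp

theorem orth_mem (v : Fin 68 → ZMod 2) (h : ∀ c ∈ code, ∑ i, v i * c i = 0) : v ∈ code := by
  intro k
  rw [← h (H k) (H_mem k)]
  exact Finset.sum_congr rfl fun i _ => mul_comm _ _

theorem code_selfDual : IsSelfDual code := by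
  apply le_antisymm
  · intro v hv c hc
    exact code_orth v c hv hc
  · intro v hv
    exact orth_mem v hv
theorem card_filter_fin (q : Fin 68 → Bool) :
    (Finset.univ.filter fun k => q k = true).card = ((List.finRange 68).filter q).length := by
  rw [Finset.card_filter, Fin.sum_univ_def]
  generalize List.finRange 68 = l
  induction l with
  | nil => rfl
  | cons a l ih =>
    rw [List.map_cons, List.sum_cons, ih]
    by_cases h : q a
    · rw [List.filter_cons_of_pos h]; simp [h, add_comm]
    · rw [List.filter_cons_of_neg h]; simp [h]

theorem low_side (b : Bool) (off : ℕ) (l : List ℕ)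
    (hl : ((List.finRange 68).filter fun k => side k == b).map row = l) (κ : ℕ)
    (exc L : List ℕ) (hb : batch off l κ exc = true)
    (hL : ∀ p ∈ exc, laneWord off l κ p ∈ L)
    (hoff : ∀ k : Fin 68, side k = b → vec off k = 0)
    (v : Fin 68 → ZMod 2) (hv : v + vec off ∈ code)
    (hk : (Finset.univ.filter fun k => v k ≠ 0 ∧ side k = b).card ≤ κ) :
    10 < hammingNorm v ∨ v ∈ L.map vec := by
  set q : Fin 68 → Bool := fun k => decide (v k ≠ 0) && (side k == b) with hq
  have hv2 : v = vec ((((List.finRange 68).filter q).map row).foldr (fun a x => a ^^^ x) off) := by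
    funext m
    rw [vec_foldr_univ]
    have h1 := expand_code _ hv b m
    have h2 : (∑ k, if q k = true then H k m else 0) =
        ∑ k, (if side k = b then (v + vec off) k * H k m else 0) := by
      apply Finset.sum_congr rfl
      intro k _
      by_cases hs : side k = b
      · rw [if_pos hs, Pi.add_apply, hoff k hs, add_zero]
        rcases zmod2_cases (v k) with h | h <;> simp [hq, h, hs]
      · simp [hq, hs]
    rw [h2, h1, Pi.add_apply, add_left_comm, add_self2, add_zero]
  have hT : (((List.finRange 68).filter q).map row).Sublist l := by
    rw [← hl]
    apply List.Sublist.map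
    rw [hq, ← List.filter_filter]
    exact List.filter_sublist
  have hlen : (((List.finRange 68).filter q).map row).length ≤ κ := by
    rw [List.length_map, ← card_filter_fin]
    refine le_trans (le_of_eq ?_) hk
    congr 1
    ext k
    simp [hq]
  have h3 := batch_spec off l κ exc L hb hL _ hT hlen
  rw [← norm_vec, ← hv2] at h3
  rcases h3 with h3 | h3
  · exact Or.inl h3
  · refine Or.inr (List.mem_map.2 ⟨_, h3, hv2.symm⟩)

theorem norm_split (v : Fin 68 → ZMod 2) :
    hammingNorm v = (Finset.univ.filter fun k => v k ≠ 0 ∧ side k = true).card +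
      (Finset.univ.filter fun k => v k ≠ 0 ∧ side k = false).card := by
  unfold hammingNorm
  rw [← Finset.card_filter_add_card_filter_not (s := Finset.univ.filter fun i => v i ≠ 0)
    (fun k => side k = true), Finset.filter_filter, Finset.filter_filter]
  simp

theorem sideL : ((List.finRange 68).filter fun k => side k == true).map row = rowsL := by
  decide +kernel
theorem sideR : ((List.finRange 68).filter fun k => side k == false).map row = rowsR := by
  decide +kernel
theorem offL_side : ∀ k ∈ List.finRange 68, side k = true → offL.testBit k = false := by
  decide +kernel
theorem offR_side : ∀ k ∈ List.finRange 68, side k = false → offR.testBit k = false := by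
  decide +kernel
theorem batchL0 : batch 0 rowsL 5 [0] = true := by decide +kernel
theorem batchR0 : batch 0 rowsR 4 [0] = true := by decide +kernel
theorem batchL : batch offL rowsL 5 excL = true := by decide +kernel
theorem batchR : batch offR rowsR 4 excR = true := by decide +kernel
theorem excL0_low : ∀ p ∈ [0], laneWord 0 rowsL 5 p ∈ [0] := by decide +kernel
theorem excR0_low : ∀ p ∈ [0], laneWord 0 rowsR 4 p ∈ [0] := by decide +kernel
theorem excL_low : ∀ p ∈ excL, laneWord offL rowsL 5 p ∈ lowShadow := by decide +kernel
theorem excR_low : ∀ p ∈ excR, laneWord offR rowsR 4 p ∈ lowShadow := by decide +kernel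

theorem low_code (v : Fin 68 → ZMod 2) (hv : v ∈ code) (h : hammingNorm v ≤ 10) :
    v ∈ [0].map vec := by
  have hv1 : v + vec 0 ∈ code := by rw [vec_zero, add_zero]; exact hv
  have hz : ∀ k, vec 0 k = 0 := fun k => by rw [vec_zero]; rfl
  have hs := norm_split v
  by_cases hc : (Finset.univ.filter fun k => v k ≠ 0 ∧ side k = true).card ≤ 5
  · rcases low_side true 0 rowsL sideL 5 [0] [0] batchL0 excL0_low (fun k _ => hz k) v hv1 hc
      with h1 | h1
    · omega
    · exact h1
  · rcases low_side false 0 rowsR sideR 4 [0] [0] batchR0 excR0_low (fun k _ => hz k) v hv1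
      (by omega) with h1 | h1
    · omega
    · exact h1

/-- A vector in the shadow. -/
def sv : Fin 68 → ZMod 2 := vec shadowMask

theorem vadd_self (v : Fin 68 → ZMod 2) : v + v = 0 := by
  funext i; exact add_self2 _

theorem shift_off (off : ℕ) (h : syn (off ^^^ shadowMask) = 0) (v : Fin 68 → ZMod 2)
    (hv : v + sv ∈ code) : v + vec off ∈ code := by
  have h1 := mem_of_syn _ h
  rw [vec_xor] at h1
  have h2 := code.add_mem hv h1
  have h3 : v + sv + (vec off + vec shadowMask) = v + vec off := by
    have h4 : sv + sv = 0 := vadd_self sv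
    calc v + sv + (vec off + vec shadowMask) = v + vec off + (sv + sv) := by
          unfold sv; abel
      _ = v + vec off := by rw [h4, add_zero]
  rwa [h3] at h2

theorem low_shadow (v : Fin 68 → ZMod 2) (hv : v + sv ∈ code) (h : hammingNorm v ≤ 10) :
    v ∈ lowShadow.map vec := by
  have hs := norm_split v
  by_cases hc : (Finset.univ.filter fun k => v k ≠ 0 ∧ side k = true).card ≤ 5
  · rcases low_side true offL rowsL sideL 5 excL lowShadow batchL excL_low
      (fun k hk => by simp [vec, offL_side k (List.mem_finRange k) hk]) v
      (shift_off _ syn_offL v hv) hc with h1 | h1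
    · omega
    · exact h1
  · rcases low_side false offR rowsR sideR 4 excR lowShadow batchR excR_low
      (fun k hk => by simp [vec, offR_side k (List.mem_finRange k) hk]) v
      (shift_off _ syn_offR v hv) (by omega) with h1 | h1
    · omega
    · exact h1

/-- The weight of a single coordinate. -/
def wt1 (a : ZMod 2) : ℕ := if a ≠ 0 then 1 else 0

theorem norm_sum (v : Fin 68 → ZMod 2) : hammingNorm v = ∑ i, wt1 (v i) := by
  unfold hammingNorm wt1
  rw [Finset.card_filter]

theorem norm_add (v w : Fin 68 → ZMod 2) :
    hammingNorm (v + w) + 2 * hammingNorm (v * w) = hammingNorm v + hammingNorm w := by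
  simp only [norm_sum]
  rw [Finset.mul_sum, ← Finset.sum_add_distrib, ← Finset.sum_add_distrib]
  apply Finset.sum_congr rfl
  intro i _
  simp only [Pi.add_apply, Pi.mul_apply]
  generalize v i = a
  generalize w i = b
  revert a b
  decide

theorem norm_cast2 (v : Fin 68 → ZMod 2) : (hammingNorm v : ZMod 2) = ∑ i, v i := by
  rw [norm_sum, Nat.cast_sum]
  apply Finset.sum_congr rfl
  intro i _
  generalize v i = a
  revert a
  decide

/-- The standard bilinear form. -/
def dot (v w : Fin 68 → ZMod 2) : ZMod 2 := ∑ i, v i * w i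

theorem dot_add (u v w : Fin 68 → ZMod 2) : dot u (v + w) = dot u v + dot u w := by
  simp [dot, mul_add, Finset.sum_add_distrib]

theorem add_dot (u v w : Fin 68 → ZMod 2) : dot (u + v) w = dot u w + dot v w := by
  simp [dot, add_mul, Finset.sum_add_distrib]

theorem dot_eq (v w : Fin 68 → ZMod 2) : dot v w = (hammingNorm (v * w) : ZMod 2) := by
  rw [norm_cast2]; rfl

/-- The weight modulo 4 is determined by the product with the shadow vector. -/
def Good (c : Fin 68 → ZMod 2) : Prop :=
  c ∈ code ∧ hammingNorm c % 4 = 2 * (hammingNorm (sv * c) % 2)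

theorem good_add (v w : Fin 68 → ZMod 2) (hv : Good v) (hw : Good w) : Good (v + w) := by
  refine ⟨code.add_mem hv.1 hw.1, ?_⟩
  have h1 := norm_add v w
  have h2 : hammingNorm (v * w) % 2 = 0 := by
    have h3 : dot v w = 0 := code_orth v w hv.1 hw.1
    rw [dot_eq, ZMod.natCast_eq_zero_iff] at h3
    omega
  have h4 := norm_add (sv * v) (sv * w)
  rw [← mul_add] at h4
  have h5 := hv.2
  have h6 := hw.2
  omega

theorem vec_and (a b : ℕ) : vec (a &&& b) = vec a * vec b := by
  funext i
  simp only [vec, Pi.mul_apply, Nat.testBit_and]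
  cases a.testBit i <;> cases b.testBit i <;> decide

theorem rows_mod4 : ∀ k ∈ List.finRange 68,
    ones (row k) % 4 = 2 * (ones (shadowMask &&& row k) % 2) := by
  decide +kernel

theorem good_row (k : Fin 68) : Good (H k) := by
  refine ⟨H_mem k, ?_⟩
  have := rows_mod4 k (List.mem_finRange k)
  rwa [← norm_vec, ← norm_vec, vec_and] at this

theorem good_zero : Good 0 := by
  refine ⟨code.zero_mem, ?_⟩
  simp

theorem good_code (v : Fin 68 → ZMod 2) (hv : v ∈ code) : Good v := by
  have h : v = ∑ k, (if side k = true then v k • H k else 0) := by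
    funext m
    rw [Finset.sum_apply, ← expand_code v hv true m]
    apply Finset.sum_congr rfl
    intro k _
    split_ifs with h
    · rfl
    · rfl
  rw [h]
  apply Finset.sum_induction _ Good (fun a b => good_add a b) good_zero
  intro k _
  split_ifs
  · rcases zmod2_cases (v k) with h | h
    · rw [h, zero_smul]; exact good_zero
    · rw [h, one_smul]; exact good_row k
  · exact good_zero

theorem code_min (v : Fin 68 → ZMod 2) (hv : v ∈ code) (h0 : v ≠ 0) : 12 ≤ hammingNorm v := by
  have h1 := (good_code v hv).2
  by_contra hc
  have h2 := low_code v hv (by omega)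
  simp only [List.map_cons, List.map_nil, List.mem_singleton, vec_zero] at h2
  exact h0 h2
/-- The nontrivial additive character of `F_2`. -/
def chi (a : ZMod 2) : ℤ := if a = 0 then 1 else -1

theorem chi_add (a b : ZMod 2) : chi (a + b) = chi a * chi b := by
  revert a b; decide

theorem chi_sum {ι : Type*} (s : Finset ι) (f : ι → ZMod 2) :
    chi (∑ i ∈ s, f i) = ∏ i ∈ s, chi (f i) := by
  classical
  induction s using Finset.induction_on with
  | empty => rfl
  | insert a s ha ih => rw [Finset.sum_insert ha, Finset.prod_insert ha, chi_add, ih]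

noncomputable instance fintypeCode : Fintype code := Fintype.ofFinite _

theorem sum_chi (x : Fin 68 → ZMod 2) [Decidable (x ∈ code)] :
    ∑ c : code, chi (dot x c) = if x ∈ code then (Fintype.card code : ℤ) else 0 := by
  split_ifs with hx
  · have h : ∀ c : code, chi (dot x c) = 1 := by
      intro c
      rw [show dot x c = 0 from code_orth x c hx c.2]
      rfl
    simp [h]
  · have h : ∃ c ∈ code, dot x c ≠ 0 := by
      by_contra hc
      push Not at hc
      exact hx (orth_mem x hc)
    obtain ⟨c0, hc0, hne⟩ := h
    have h1 : ∑ c : code, chi (dot x c) = ∑ c : code, chi (dot x ((⟨c0, hc0⟩ + c : code) : _)) :=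
      (Equiv.sum_comp (Equiv.addLeft (⟨c0, hc0⟩ : code)) fun c : code => chi (dot x c)).symm
    have h2 : ∀ c : code, chi (dot x ((⟨c0, hc0⟩ + c : code) : _)) = - chi (dot x c) := by
      intro c
      rw [Submodule.coe_add, dot_add, chi_add]
      have : chi (dot x c0) = -1 := by simp [chi, hne]
      rw [this]; ring
    rw [Finset.sum_congr rfl fun c _ => h2 c, Finset.sum_neg_distrib] at h1
    linarith

open Polynomial in
theorem gen_poly (c : Fin 68 → ZMod 2) :
    ∑ v : Fin 68 → ZMod 2, C (chi (dot v c)) * X ^ hammingNorm v =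
      (1 - X : ℤ[X]) ^ hammingNorm c * (1 + X) ^ (68 - hammingNorm c) := by
  have h1 : ∀ v : Fin 68 → ZMod 2, C (chi (dot v c)) * (X : ℤ[X]) ^ hammingNorm v =
      ∏ i, (C (chi (v i * c i)) * X ^ wt1 (v i)) := by
    intro v
    rw [Finset.prod_mul_distrib, Finset.prod_pow_eq_pow_sum, ← norm_sum, ← map_prod, ← chi_sum]
    rfl
  simp only [h1]
  rw [← Fintype.piFinset_univ, ← Finset.prod_univ_sum (fun _ : Fin 68 => (Finset.univ : Finset (ZMod 2)))
    (fun i a => C (chi (a * c i)) * (X : ℤ[X]) ^ wt1 a)]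
  have h2 : ∀ i, ∑ a : ZMod 2, C (chi (a * c i)) * (X : ℤ[X]) ^ wt1 a =
      if c i ≠ 0 then 1 - X else 1 + X := by
    intro i
    rw [show (Finset.univ : Finset (ZMod 2)) = {0, 1} from by decide,
      Finset.sum_pair (by decide)]
    rcases zmod2_cases (c i) with h | h
    · simp [h, wt1, chi]
    · simp [h, wt1, chi, sub_eq_add_neg]
  simp only [h2]
  rw [Finset.prod_ite, Finset.prod_const, Finset.prod_const]
  congr 2
  have h3 := Finset.card_filter_add_card_filter_not (s := (Finset.univ : Finset (Fin 68)))
    (fun i => c i ≠ 0)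
  rw [Finset.card_univ, Fintype.card_fin] at h3
  unfold hammingNorm
  omega

/-- Binomial coefficients in a form which evaluates quickly. -/
def bin (n k : ℕ) : ℕ := n.descFactorial k / k.factorial

/-- Krawtchouk numbers. -/
def kraw (j w : ℕ) : ℤ :=
  ((List.range (j + 1)).map fun i => (-1) ^ i * (bin w i : ℤ) * (bin (68 - w) (j - i) : ℤ)).sum

open Polynomial in
theorem coeff_gen (j w : ℕ) :
    ((1 - X : ℤ[X]) ^ w * (1 + X) ^ (68 - w)).coeff j = kraw j w := by
  rw [coeff_mul, Finset.Nat.sum_antidiagonal_eq_sum_range_succ_mk, kraw, Finset.sum_range,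
    Fin.sum_univ_def, ← List.map_coe_finRange_eq_range, List.map_map]
  congr 1
  apply List.map_congr_left
  intro i _
  simp only [Function.comp]
  rw [coeff_one_add_X_pow]
  have h : (1 - X : ℤ[X]) ^ w = ((1 + X) ^ w).comp (C (-1) * X) := by
    simp [sub_eq_add_neg]
  rw [h, comp_C_mul_X_coeff, coeff_one_add_X_pow, bin, bin, ← Nat.choose_eq_descFactorial_div_factorial,
    ← Nat.choose_eq_descFactorial_div_factorial]
  ring

/-- The function of the weight with values in the given list. -/
def fn (p : List ℤ) (j : ℕ) : ℤ := p.getD j 0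

/-- The Krawtchouk transform. -/
def tr (p : List ℤ) (w : ℕ) : ℤ := ((List.range p.length).map fun j => fn p j * kraw j w).sum

theorem transform (p : List ℤ) (c : Fin 68 → ZMod 2) :
    ∑ v : Fin 68 → ZMod 2, fn p (hammingNorm v) * chi (dot v c) = tr p (hammingNorm c) := by
  have h1 : ∀ j, ∑ v : Fin 68 → ZMod 2, (if hammingNorm v = j then chi (dot v c) else 0) =
      kraw j (hammingNorm c) := by
    intro j
    rw [← coeff_gen, ← gen_poly, Polynomial.finsetSum_coeff]
    apply Finset.sum_congr rfl
    intro v _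
    rw [Polynomial.coeff_C_mul_X_pow]
    simp [eq_comm]
  have h2 : tr p (hammingNorm c) = ∑ j ∈ Finset.range p.length, fn p j * kraw j (hammingNorm c) := by
    rw [tr, Finset.sum_range, Fin.sum_univ_def, ← List.map_coe_finRange_eq_range, List.map_map]
    rfl
  rw [h2]
  simp only [← h1, Finset.mul_sum]
  rw [Finset.sum_comm]
  apply Finset.sum_congr rfl
  intro v _
  simp only [mul_ite, mul_zero]
  rw [Finset.sum_ite_eq]
  split_ifs with h
  · rfl
  · rw [Finset.mem_range, not_lt] at h
    rw [fn, List.getD_eq_default _ _ h, zero_mul]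

open Classical in
theorem macw (p : List ℤ) (s : Fin 68 → ZMod 2) :
    ∑ c : code, chi (dot s c) * tr p (hammingNorm (c : Fin 68 → ZMod 2)) =
      (Fintype.card code : ℤ) *
        ∑ v : Fin 68 → ZMod 2, if v + s ∈ code then fn p (hammingNorm v) else 0 := by
  simp only [← transform, Finset.mul_sum]
  rw [Finset.sum_comm]
  apply Finset.sum_congr rfl
  intro v _
  have h : ∀ c : code, chi (dot s c) * (fn p (hammingNorm v) * chi (dot v c)) =
      fn p (hammingNorm v) * chi (dot (v + s) c) := by
    intro c
    rw [add_dot, chi_add]; ring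
  simp only [h]
  rw [← Finset.mul_sum, sum_chi]
  split_ifs <;> ring

theorem norm_le68 (v : Fin 68 → ZMod 2) : hammingNorm v ≤ 68 := by
  simpa using hammingNorm_le_card_fintype (x := v)

open Classical Polynomial in
theorem card_code : (Fintype.card code : ℤ) = 2 ^ 34 := by
  have h1 : ∑ v : Fin 68 → ZMod 2, ∑ c : code, chi (dot v c) = 2 ^ 68 := by
    rw [Finset.sum_comm]
    have h2 : ∀ c : code, ∑ v : Fin 68 → ZMod 2, chi (dot v c) = if c = 0 then 2 ^ 68 else 0 := by
      intro c
      have h3 := congrArg (eval 1) (gen_poly c)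
      simp only [eval_finsetSum, eval_mul, eval_C, eval_pow, eval_X, one_pow, mul_one, eval_sub,
        eval_add, eval_one, sub_self] at h3
      rw [h3]
      split_ifs with hc
      · rw [hc]; simp
      · have : hammingNorm (c : Fin 68 → ZMod 2) ≠ 0 := by
          rw [hammingNorm_ne_zero_iff]
          intro h; exact hc (Subtype.ext h)
        rw [zero_pow this, zero_mul]
    rw [Finset.sum_congr rfl fun c _ => h2 c]
    simp
  have h4 : ∑ v : Fin 68 → ZMod 2, ∑ c : code, chi (dot v c) =
      (Fintype.card code : ℤ) * (Fintype.card code : ℤ) := by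
    rw [Finset.sum_congr rfl fun v _ => sum_chi v, ← Finset.sum_filter, Finset.sum_const,
      nsmul_eq_mul]
    rw [← Fintype.card_of_subtype (p := fun x => x ∈ code)
      (Finset.univ.filter fun v : Fin 68 → ZMod 2 => v ∈ code) (by simp)]
  rw [h4] at h1
  have h5 : (0 : ℤ) ≤ Fintype.card code := Int.natCast_nonneg _
  nlinarith
open Classical in
theorem sum_low (s : Fin 68 → ZMod 2) (L : List ℕ) (hin : ∀ x ∈ L, vec x + s ∈ code)
    (hlow : ∀ v, v + s ∈ code → hammingNorm v ≤ 10 → v ∈ L.map vec)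
    (hnd : (L.map vec).Nodup) (p : List ℤ) (hp : p.length = 11) :
    (∑ v : Fin 68 → ZMod 2, if v + s ∈ code then fn p (hammingNorm v) else 0) =
      (L.map fun x => fn p (ones x)).sum := by
  have hin2 : ∀ v ∈ L.map vec, v + s ∈ code := List.forall_mem_map.2 hin
  have h1 : (L.map fun x => fn p (ones x)).sum =
      ∑ v ∈ (L.map vec).toFinset, fn p (hammingNorm v) := by
    rw [List.sum_toFinset _ hnd, List.map_map]
    congr 1
    apply List.map_congr_left
    intro x _
    simp only [Function.comp, norm_vec]
  have h3 : ∀ v ∈ (L.map vec).toFinset, fn p (hammingNorm v) =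
      if v + s ∈ code then fn p (hammingNorm v) else 0 := by
    intro v hv
    rw [if_pos (hin2 v (List.mem_toFinset.1 hv))]
  rw [h1, Finset.sum_congr rfl h3]
  symm
  apply Finset.sum_subset (Finset.subset_univ _)
  intro v _ hn
  rw [List.mem_toFinset] at hn
  split_ifs with hv
  · have h2 : ¬ hammingNorm v ≤ 10 := fun h => hn (hlow v hv h)
    rw [fn, List.getD_eq_default _ _ (by omega)]
  · rfl

theorem vec_inj (a b : ℕ) (ha : a < 2 ^ 68) (hb : b < 2 ^ 68) (h : vec a = vec b) : a = b := by
  apply Nat.eq_of_testBit_eq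
  intro i
  by_cases hi : i < 68
  · have h1 := congrFun h ⟨i, hi⟩
    simp only [vec] at h1
    revert h1
    cases a.testBit i <;> cases b.testBit i <;> simp
  · have h2 : 2 ^ 68 ≤ 2 ^ i := Nat.pow_le_pow_right (by norm_num) (by omega)
    rw [Nat.testBit_lt_two_pow (lt_of_lt_of_le ha h2), Nat.testBit_lt_two_pow (lt_of_lt_of_le hb h2)]

theorem lowShadow_lt : ∀ x ∈ lowShadow, x < 2 ^ 68 := by decide +kernel
theorem lowShadow_nodup : lowShadow.Nodup := by decide +kernel

theorem lowShadow_vec_nodup : (lowShadow.map vec).Nodup := by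
  apply List.Nodup.map_on _ lowShadow_nodup
  intro a ha b hb h
  exact vec_inj a b (lowShadow_lt a ha) (lowShadow_lt b hb) h

/-- Coefficients of the polynomial vanishing at 16, 20, ..., 52, in the Krawtchouk basis. -/
def polA : List ℤ := [182, 0, 104, 0, 26, 0, 14, 0, 2, 0, 1]

/-- Coefficients of the polynomial vanishing at 18, 22, ..., 50, in the Krawtchouk basis. -/
def polB : List ℤ := [1870, 0, 616, 0, 194, 0, 46, 0, 10, 0, 1]

theorem sumA_shadow : (lowShadow.map fun x => fn polA (ones x)).sum = 179 := by decide +kernel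
theorem sumB_shadow : (lowShadow.map fun x => fn polB (ones x)).sum = 211 := by decide +kernel
theorem sumA_code : ([0].map fun x => fn polA (ones x)).sum = 182 := by decide +kernel
theorem sumB_code : ([0].map fun x => fn polB (ones x)).sum = 1870 := by decide +kernel

theorem macw_code (p : List ℤ) (hp : p.length = 11) :
    ∑ c : code, tr p (hammingNorm (c : Fin 68 → ZMod 2)) =
      2 ^ 34 * ([0].map fun x => fn p (ones x)).sum := by
  classical
  have h := macw p 0
  rw [sum_low 0 [0] (by simp [vec_zero]) (fun v hv hn => low_code v (by simpa using hv) hn)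
    (by simp) p hp, card_code] at h
  rw [← h]
  apply Finset.sum_congr rfl
  intro c _
  have : chi (dot 0 c) = 1 := by simp [dot, chi]
  rw [this, one_mul]

theorem macw_shadow (p : List ℤ) (hp : p.length = 11) :
    ∑ c : code, chi (dot sv c) * tr p (hammingNorm (c : Fin 68 → ZMod 2)) =
      2 ^ 34 * (lowShadow.map fun x => fn p (ones x)).sum := by
  classical
  have h := macw p sv
  rwa [sum_low sv lowShadow (fun x hx => by
    have := mem_of_syn _ (syn_lowShadow x hx)
    rwa [vec_xor] at this) low_shadow lowShadow_vec_nodup p hp, card_code] at h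

/-- The indicator of an equality. -/
def ind (a b : ℕ) : ℤ := if a = b then 1 else 0

theorem tableA : ∀ w ∈ List.range 69, w % 4 = 0 → (w = 0 ∨ 12 ≤ w) → (w = 68 ∨ w ≤ 56) →
    tr polA w = 307090161664 * (ind w 0 + ind w 68) + 1073741824 * (ind w 12 + ind w 56) := by
  decide +kernel

theorem tableB : ∀ w ∈ List.range 69, w % 4 = 2 → (w = 0 ∨ 12 ≤ w) → (w = 68 ∨ w ≤ 56) →
    tr polB w = 536870912 * (ind w 14 + ind w 54) := by
  decide +kernel

/-- The all-one vector. -/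
def one68 : Fin 68 → ZMod 2 := vec (2 ^ 68 - 1)

theorem one68_mem : one68 ∈ code := mem_of_syn _ syn_one

theorem one68_eq : one68 = 1 := by
  funext i
  simp only [one68, vec, Nat.testBit_two_pow_sub_one]
  simp

theorem norm_compl (v : Fin 68 → ZMod 2) : hammingNorm (one68 + v) = 68 - hammingNorm v := by
  have h1 := norm_add one68 v
  have h2 : hammingNorm one68 = 68 := by
    rw [one68, norm_vec]; decide +kernel
  have h3 : one68 * v = v := by rw [one68_eq, one_mul]
  have h4 := norm_le68 v
  rw [h2, h3] at h1
  omega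

theorem norm_bounds (v : Fin 68 → ZMod 2) (hv : v ∈ code) :
    (hammingNorm v = 0 ∨ 12 ≤ hammingNorm v) ∧ (hammingNorm v = 68 ∨ hammingNorm v ≤ 56) := by
  have h1 : ∀ u ∈ code, hammingNorm u = 0 ∨ 12 ≤ hammingNorm u := by
    intro u hu
    by_cases h : u = 0
    · left; rw [h]; simp
    · exact Or.inr (code_min u hu h)
  have h2 := h1 _ (code.add_mem one68_mem hv)
  rw [norm_compl] at h2
  have h3 := norm_le68 v
  refine ⟨h1 v hv, ?_⟩
  omega

/-- The number of codewords of weight `w`. -/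
noncomputable def num (w : ℕ) : ℤ := ∑ c : code, ind (hammingNorm (c : Fin 68 → ZMod 2)) w

theorem num_compl (w : ℕ) (hw : w ≤ 68) : num (68 - w) = num w := by
  unfold num
  rw [← Equiv.sum_comp (Equiv.addLeft (⟨one68, one68_mem⟩ : code))]
  apply Finset.sum_congr rfl
  intro c _
  rw [Equiv.coe_addLeft, Submodule.coe_add, norm_compl]
  have h := norm_le68 (c : Fin 68 → ZMod 2)
  unfold ind
  congr 1
  apply propext
  omega

theorem num_zero : num 0 = 1 := by
  classical
  unfold num ind
  have h : ∀ c : code, (hammingNorm (c : Fin 68 → ZMod 2) = 0) ↔ c = 0 := by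
    intro c
    rw [hammingNorm_eq_zero]
    exact Submodule.coe_eq_zero
  simp only [h]
  simp

theorem chi_cases (c : code) :
    (chi (dot sv c) = 1 ∧ hammingNorm (c : Fin 68 → ZMod 2) % 4 = 0) ∨
    (chi (dot sv c) = -1 ∧ hammingNorm (c : Fin 68 → ZMod 2) % 4 = 2) := by
  have h1 := (good_code c c.2).2
  rw [dot_eq]
  rcases Nat.mod_two_eq_zero_or_one (hammingNorm (sv * (c : Fin 68 → ZMod 2))) with h | h
  · left
    refine ⟨?_, by omega⟩
    have : ((hammingNorm (sv * (c : Fin 68 → ZMod 2)) : ℕ) : ZMod 2) = 0 := by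
      rw [ZMod.natCast_eq_zero_iff]; omega
    rw [this]; rfl
  · right
    refine ⟨?_, by omega⟩
    have : ((hammingNorm (sv * (c : Fin 68 → ZMod 2)) : ℕ) : ZMod 2) ≠ 0 := by
      rw [Ne, ZMod.natCast_eq_zero_iff]; omega
    rw [chi, if_neg this]

theorem ind_ne (a b : ℕ) (h : a ≠ b) : ind a b = 0 := if_neg h

theorem num_twelve : num 12 = 1158 := by
  have h1 := macw_code polA rfl
  have h2 := macw_shadow polA rfl
  rw [sumA_code] at h1
  rw [sumA_shadow] at h2
  have h3 : ∀ c : code, tr polA (hammingNorm (c : Fin 68 → ZMod 2)) +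
      chi (dot sv c) * tr polA (hammingNorm (c : Fin 68 → ZMod 2)) =
      2 * (307090161664 * (ind (hammingNorm (c : Fin 68 → ZMod 2)) 0 +
        ind (hammingNorm (c : Fin 68 → ZMod 2)) 68) +
        1073741824 * (ind (hammingNorm (c : Fin 68 → ZMod 2)) 12 +
        ind (hammingNorm (c : Fin 68 → ZMod 2)) 56)) := by
    intro c
    have hb := norm_bounds c c.2
    have hl := norm_le68 (c : Fin 68 → ZMod 2)
    rcases chi_cases c with ⟨h4, h5⟩ | ⟨h4, h5⟩
    · rw [h4, ← tableA _ (List.mem_range.2 (by omega)) h5 hb.1 hb.2]; ring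
    · rw [h4, ind_ne _ 0 (by omega), ind_ne _ 68 (by omega), ind_ne _ 12 (by omega),
        ind_ne _ 56 (by omega)]; ring
  have h4 := Finset.sum_congr (rfl : (Finset.univ : Finset code) = Finset.univ) fun c _ => h3 c
  rw [Finset.sum_add_distrib, h1, h2, ← Finset.mul_sum, Finset.sum_add_distrib, ← Finset.mul_sum,
    ← Finset.mul_sum, Finset.sum_add_distrib, Finset.sum_add_distrib] at h4
  have h5 : num 68 = num 0 := num_compl 0 (by norm_num)
  have h6 : num 56 = num 12 := num_compl 12 (by norm_num)
  change _ = 2 * (307090161664 * (num 0 + num 68) + 1073741824 * (num 12 + num 56)) at h4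
  rw [h5, h6, num_zero] at h4
  norm_num at h4
  linarith

theorem num_fourteen : num 14 = 13272 := by
  have h1 := macw_code polB rfl
  have h2 := macw_shadow polB rfl
  rw [sumB_code] at h1
  rw [sumB_shadow] at h2
  have h3 : ∀ c : code, tr polB (hammingNorm (c : Fin 68 → ZMod 2)) -
      chi (dot sv c) * tr polB (hammingNorm (c : Fin 68 → ZMod 2)) =
      2 * (536870912 * (ind (hammingNorm (c : Fin 68 → ZMod 2)) 14 +
        ind (hammingNorm (c : Fin 68 → ZMod 2)) 54)) := by
    intro c
    have hb := norm_bounds c c.2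
    have hl := norm_le68 (c : Fin 68 → ZMod 2)
    rcases chi_cases c with ⟨h4, h5⟩ | ⟨h4, h5⟩
    · rw [h4, ind_ne _ 14 (by omega), ind_ne _ 54 (by omega)]; ring
    · rw [h4, ← tableB _ (List.mem_range.2 (by omega)) h5 hb.1 hb.2]; ring
  have h4 := Finset.sum_congr (rfl : (Finset.univ : Finset code) = Finset.univ) fun c _ => h3 c
  rw [Finset.sum_sub_distrib, h1, h2, ← Finset.mul_sum, ← Finset.mul_sum,
    Finset.sum_add_distrib] at h4
  have h6 : num 54 = num 14 := num_compl 14 (by norm_num)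
  change _ = 2 * (536870912 * (num 14 + num 54)) at h4
  rw [h6] at h4
  norm_num at h4
  linarith

theorem ncard_num (w : ℕ) : ({v | v ∈ code ∧ hammingNorm v = w}.ncard : ℤ) = num w := by
  classical
  have h : {v | v ∈ code ∧ hammingNorm v = w} =
      (((Finset.univ.filter fun c : code => hammingNorm (c : Fin 68 → ZMod 2) = w).map
        (Function.Embedding.subtype _) : Finset (Fin 68 → ZMod 2)) : Set (Fin 68 → ZMod 2)) := by
    ext v
    simp [and_comm]
  rw [h, Set.ncard_coe_finset, Finset.card_map, Finset.card_filter, num, Nat.cast_sum]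
  apply Finset.sum_congr rfl
  intro c _
  unfold ind
  split_ifs <;> rfl

/-- There exists a binary self-dual `[68, 34, 12]` code with weight enumerator
`W_{68,2}` (γ = 1, β = 179): minimum nonzero weight 12, exactly 1158 codewords of weight 12
and exactly 13272 codewords of weight 14. -/
theorem exists_selfDual_68_15 :
    ∃ C : Submodule (ZMod 2) (Fin 68 → ZMod 2),
      IsSelfDual C ∧
      (∀ v ∈ C, v ≠ 0 → 12 ≤ hammingNorm v) ∧
      (∃ v ∈ C, hammingNorm v = 12) ∧
      {v | v ∈ C ∧ hammingNorm v = 12}.ncard = 1158 ∧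
      {v | v ∈ C ∧ hammingNorm v = 14}.ncard = 13272 := by
  have h12 : {v | v ∈ code ∧ hammingNorm v = 12}.ncard = 1158 := by
    have h := ncard_num 12
    rw [num_twelve] at h
    exact_mod_cast h
  have h14 : {v | v ∈ code ∧ hammingNorm v = 14}.ncard = 13272 := by
    have h := ncard_num 14
    rw [num_fourteen] at h
    exact_mod_cast h
  refine ⟨code, code_selfDual, code_min, ?_, h12, h14⟩
  have hne : {v | v ∈ code ∧ hammingNorm v = 12}.Nonempty := by
    apply Set.nonempty_of_ncard_ne_zero
    rw [h12]
    norm_num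
  obtain ⟨v, hv⟩ := hne
  exact ⟨v, hv.1, hv.2⟩
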